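/- For an extension B ⊆ A of k-algebras and an A-bimodule X, the formula b_{A|B}(x⊗α₁⊗⋯⊗α_n) = xσ(α₁)⊗α₂⊗⋯⊗α_n + Σ_{i=1}^{n−1}(−1)^i x⊗α₁⊗⋯⊗π(σ(α_i)σ(α_{i+1}))⊗⋯⊗α_n + (−1)^n σ(α_n)x⊗α₁⊗⋯⊗α_{n−1} induces, for every n ≥ 1, a well-defined k-linear map b_{A|B} : X⊗_{B^e}(A/B)^{⊗_B n} → X⊗_{B^e}(A/B)^{⊗_B(n−1)} (with target X_B = X/⟨bx−xb⟩ for n = 1); these maps satisfy b_{A|B}∘b_{A|B} = 0 and do not depend on the choice of the k-linear section σ of π. -/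

import Mathlib

open scoped TensorProduct
open MulOpposite PiTensorProduct

namespace JZH

variable (k : Type) [Field k]
variable (A : Type) [Ring A] [Algebra k A] (B : Subalgebra k A)
variable (X : Type) [AddCommGroup X] [Module k X]
  [Module A X] [Module Aᵐᵒᵖ X] [SMulCommClass A Aᵐᵒᵖ X]
  [IsScalarTower k A X] [IsScalarTower k Aᵐᵒᵖ X]

/-- The quotient `B`-bimodule `A/B`. -/
abbrev QM : Type := A ⧸ (Subalgebra.toSubmodule B)

/-- The canonical projection `π : A → A/B`. -/
noncomputable def πQ : A →ₗ[k] QM k A B := (Subalgebra.toSubmodule B).mkQ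

/-- The left action of `b ∈ B` on `A/B`, induced by left multiplication. -/
noncomputable def Ql (b : B) : QM k A B →ₗ[k] QM k A B :=
  Submodule.mapQ _ _ (LinearMap.mulLeft k (b : A))
    (fun a ha => by
      simp only [Submodule.mem_comap, LinearMap.mulLeft_apply, Subalgebra.mem_toSubmodule] at *
      exact B.mul_mem b.2 ha)

/-- The right action of `b ∈ B` on `A/B`, induced by right multiplication. -/
noncomputable def Qr (b : B) : QM k A B →ₗ[k] QM k A B :=
  Submodule.mapQ _ _ (LinearMap.mulRight k (b : A))
    (fun a ha => by
      simp only [Submodule.mem_comap, LinearMap.mulRight_apply, Subalgebra.mem_toSubmodule] at *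
      exact B.mul_mem ha b.2)

/-- Merging of two adjacent entries of a tuple, using a given "product". -/
def mergeFun {M : Type} (mul : M → M → M) {n : ℕ} (a : Fin (n+1) → M) (j : Fin n) :
    Fin n → M := fun l =>
  if (l : ℕ) < (j : ℕ) then a l.castSucc
  else if (l : ℕ) = (j : ℕ) then mul (a l.castSucc) (a l.succ)
  else a l.succ

/-- Degree-`n` term of the Hochschild chain complex of `A` with coefficients in `X`. -/
def CH : ℕ → Type
  | 0 => X
  | n + 1 => X ⊗[k] (⨂[k] (_ : Fin (n+1)), A)

noncomputable instance CHacg : ∀ n, AddCommGroup (CH k A X n)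
  | 0 => inferInstanceAs (AddCommGroup X)
  | n + 1 => inferInstanceAs (AddCommGroup (X ⊗[k] (⨂[k] (_ : Fin (n+1)), A)))

noncomputable instance CHmod : ∀ n, Module k (CH k A X n)
  | 0 => inferInstanceAs (Module k X)
  | n + 1 => inferInstanceAs (Module k (X ⊗[k] (⨂[k] (_ : Fin (n+1)), A)))

/-- The Hochschild boundary formula in lowest degree: `b(x ⊗ a) = x·a − a·x`. -/
def hochZero (x : X) (a : Fin 1 → A) : CH k A X 0 :=
  (op (a 0) • x) - (a 0 • x)

/-- The Hochschild boundary formula on elementary tensors,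
`b(x ⊗ a₁ ⊗ ⋯ ⊗ a_{n+2}) = x·a₁ ⊗ a₂ ⊗ ⋯ + Σ (−1)^i x ⊗ ⋯ ⊗ a_i a_{i+1} ⊗ ⋯ +
(−1)^{n+2} a_{n+2}·x ⊗ a₁ ⊗ ⋯ ⊗ a_{n+1}`. -/
noncomputable def hochSucc (n : ℕ) (x : X) (a : Fin (n+2) → A) : CH k A X (n+1) :=
  (op (a 0) • x) ⊗ₜ[k] (tprod k fun i : Fin (n+1) => a i.succ)
  + ∑ j : Fin (n+1), ((-1 : ℤ) ^ ((j : ℕ) + 1)) •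
      (x ⊗ₜ[k] (tprod k (mergeFun (fun y z => y * z) a j)))
  + ((-1 : ℤ) ^ (n + 2)) •
      ((a (Fin.last (n+1)) • x) ⊗ₜ[k] (tprod k fun i : Fin (n+1) => a i.castSucc))

/-- `d` is the family of Hochschild differentials of `A` with coefficients in `X`. -/
def IsHochschildDiff (d : ∀ n, CH k A X (n+1) →ₗ[k] CH k A X n) : Prop :=
  (∀ (x : X) (a : Fin 1 → A), d 0 (x ⊗ₜ[k] tprod k a) = hochZero k A X x a) ∧
  (∀ (n : ℕ) (x : X) (a : Fin (n+2) → A),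
    d (n+1) (x ⊗ₜ[k] tprod k a) = hochSucc k A X n x a)

/-- Degree-`n` term of the Hochschild chain complex of the subalgebra `B` with
coefficients in `X`. -/
def CHB : ℕ → Type
  | 0 => X
  | n + 1 => X ⊗[k] (⨂[k] (_ : Fin (n+1)), B)

noncomputable instance CHBacg : ∀ n, AddCommGroup (CHB k A B X n)
  | 0 => inferInstanceAs (AddCommGroup X)
  | n + 1 => inferInstanceAs (AddCommGroup (X ⊗[k] (⨂[k] (_ : Fin (n+1)), B)))

noncomputable instance CHBmod : ∀ n, Module k (CHB k A B X n)
  | 0 => inferInstanceAs (Module k X)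
  | n + 1 => inferInstanceAs (Module k (X ⊗[k] (⨂[k] (_ : Fin (n+1)), B)))

/-- Hochschild boundary formula for `B`, lowest degree. -/
def hochBZero (x : X) (b : Fin 1 → B) : CHB k A B X 0 :=
  (op ((b 0 : A)) • x) - ((b 0 : A) • x)

/-- Hochschild boundary formula for `B` on elementary tensors. -/
noncomputable def hochBSucc (n : ℕ) (x : X) (b : Fin (n+2) → B) : CHB k A B X (n+1) :=
  (op ((b 0 : A)) • x) ⊗ₜ[k] (tprod k fun i : Fin (n+1) => b i.succ)
  + ∑ j : Fin (n+1), ((-1 : ℤ) ^ ((j : ℕ) + 1)) •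
      (x ⊗ₜ[k] (tprod k (mergeFun (fun y z => y * z) b j)))
  + ((-1 : ℤ) ^ (n + 2)) •
      (((b (Fin.last (n+1)) : A) • x) ⊗ₜ[k] (tprod k fun i : Fin (n+1) => b i.castSucc))

/-- `d` is the family of Hochschild differentials of `B` with coefficients in `X`. -/
def IsHochschildDiffB (d : ∀ n, CHB k A B X (n+1) →ₗ[k] CHB k A B X n) : Prop :=
  (∀ (x : X) (b : Fin 1 → B), d 0 (x ⊗ₜ[k] tprod k b) = hochBZero k A B X x b) ∧
  (∀ (n : ℕ) (x : X) (b : Fin (n+2) → B),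
    d (n+1) (x ⊗ₜ[k] tprod k b) = hochBSucc k A B X n x b)

/-- The subspace of `X` spanned by the commutators `b·x − x·b`, `b ∈ B`;
the quotient is `X_B`. -/
def commRel : Submodule k X :=
  Submodule.span k {z : X | ∃ (b : B) (x : X), z = (b : A) • x - op (b : A) • x}

/-- The balancing relations defining `X ⊗_{Bᵉ} (A/B)^{⊗_B (n+1)}` inside
`X ⊗[k] (A/B)^{⊗[k] (n+1)}`. -/
def relRel (n : ℕ) : Submodule k (X ⊗[k] (⨂[k] (_ : Fin (n+1)), QM k A B)) :=
  Submodule.span k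
    ({z | ∃ (x : X) (α : Fin (n+1) → QM k A B) (b : B),
        z = (op (b : A) • x) ⊗ₜ[k] tprod k α
            - x ⊗ₜ[k] tprod k (Function.update α 0 (Ql k A B b (α 0)))} ∪
     {z | ∃ (x : X) (α : Fin (n+1) → QM k A B) (b : B) (i : Fin n),
        z = x ⊗ₜ[k] tprod k (Function.update α i.castSucc (Qr k A B b (α i.castSucc)))
            - x ⊗ₜ[k] tprod k (Function.update α i.succ (Ql k A B b (α i.succ)))} ∪
     {z | ∃ (x : X) (α : Fin (n+1) → QM k A B) (b : B),
        z = x ⊗ₜ[k] tprod k (Function.update α (Fin.last n) (Qr k A B b (α (Fin.last n))))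
            - ((b : A) • x) ⊗ₜ[k] tprod k α})

/-- Degree-`n` term of the relative Hochschild chain complex `C_*(A|B,X)`:
`X_B` in degree `0` and `X ⊗_{Bᵉ} (A/B)^{⊗_B n}` in degree `n ≥ 1`. -/
def RC : ℕ → Type
  | 0 => X ⧸ commRel k A B X
  | n + 1 => (X ⊗[k] (⨂[k] (_ : Fin (n+1)), QM k A B)) ⧸ relRel k A B X n

noncomputable instance RCacg : ∀ n, AddCommGroup (RC k A B X n)
  | 0 => inferInstanceAs (AddCommGroup (_ ⧸ _))
  | n + 1 => inferInstanceAs (AddCommGroup (_ ⧸ _))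

noncomputable instance RCmod : ∀ n, Module k (RC k A B X n)
  | 0 => inferInstanceAs (Module k (_ ⧸ _))
  | n + 1 => inferInstanceAs (Module k (_ ⧸ _))

/-- Class of an element of `X ⊗[k] (A/B)^{⊗ (n+1)}` in the relative chain module. -/
noncomputable def mkRC (n : ℕ) :
    (X ⊗[k] (⨂[k] (_ : Fin (n+1)), QM k A B)) →ₗ[k] RC k A B X (n+1) :=
  (relRel k A B X n).mkQ

/-- Class of an element of `X` in `X_B`. -/
noncomputable def mkXB : X →ₗ[k] RC k A B X 0 := (commRel k A B X).mkQ

variable (σ : QM k A B →ₗ[k] A)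

/-- Relative Hochschild boundary formula, lowest degree:
`b(x ⊗ α) = x·σ(α) − σ(α)·x` (with values in `X`, before passing to `X_B`). -/
def relZero (x : X) (α : Fin 1 → QM k A B) : X :=
  (op (σ (α 0)) • x) - (σ (α 0) • x)

/-- Relative Hochschild boundary formula on elementary tensors (values in
`X ⊗[k] (A/B)^{⊗(n+1)}`, before passing to the quotient). -/
noncomputable def relSucc (n : ℕ) (x : X) (α : Fin (n+2) → QM k A B) :
    X ⊗[k] (⨂[k] (_ : Fin (n+1)), QM k A B) :=
  (op (σ (α 0)) • x) ⊗ₜ[k] (tprod k fun i : Fin (n+1) => α i.succ)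
  + ∑ j : Fin (n+1), ((-1 : ℤ) ^ ((j : ℕ) + 1)) •
      (x ⊗ₜ[k] (tprod k (mergeFun (fun y z => πQ k A B (σ y * σ z)) α j)))
  + ((-1 : ℤ) ^ (n + 2)) •
      ((σ (α (Fin.last (n+1))) • x) ⊗ₜ[k] (tprod k fun i : Fin (n+1) => α i.castSucc))

/-- `d` is the family of relative Hochschild differentials, for the section `σ`. -/
def IsRelDiff (d : ∀ n, RC k A B X (n+1) →ₗ[k] RC k A B X n) : Prop :=
  (∀ (x : X) (α : Fin 1 → QM k A B),
    d 0 (mkRC k A B X 0 (x ⊗ₜ[k] tprod k α)) = mkXB k A B X (relZero k A B X σ x α)) ∧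
  (∀ (n : ℕ) (x : X) (α : Fin (n+2) → QM k A B),
    d (n+1) (mkRC k A B X (n+1) (x ⊗ₜ[k] tprod k α)) =
      mkRC k A B X n (relSucc k A B X σ n x α))

/-- The chain map `κ : C_*(A,X) → C_*(A|B,X)` induced by `π`. -/
noncomputable def κmap : ∀ n, CH k A X n →ₗ[k] RC k A B X n
  | 0 => mkXB k A B X
  | n + 1 => (mkRC k A B X n).comp
      (TensorProduct.map LinearMap.id (PiTensorProduct.map fun _ => πQ k A B))

/-- The chain map `ι : C_*(B,X) → C_*(A,X)` induced by the inclusion `B ⊆ A`. -/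
noncomputable def ιmap : ∀ n, CHB k A B X n →ₗ[k] CH k A X n
  | 0 => LinearMap.id
  | n + 1 => TensorProduct.map LinearMap.id (PiTensorProduct.map fun _ => B.val.toLinearMap)

end JZH

/-!
Call a chain `x ⊗ a₁ ⊗ ⋯ ⊗ aₙ` of `A` degenerate if some entry lies in `B`. The projection `κ` to
the relative complex kills degenerate chains, and modulo degenerate chains the Hochschild
differential of `w = x ⊗ ⋯ ⊗ β ⊗ ⋯` with `β ∈ B` is, up to sign, the difference of the two faces
merging `β` with its left and with its right neighbour. These differences are exactly the
`B`-balancing relations, so `κ (b w) = 0`; and `b (b w) = 0` then shows that `κ ∘ b` also kills the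
balancing relations. Hence `κ ∘ b` factors through the surjection `κ`, uniquely and without
reference to `σ`. The boundary formula asserts `d ∘ κ = κ ∘ b` on chains with entries in the image
of `σ`, and this suffices because `κ ∘ b` only depends on the entries modulo `B`.
-/

namespace JZH

section Multilinear

variable {R ι : Type*} {M : ι → Type*} {N : Type*}

/-- A multilinear map built from a function which is, in each variable separately, given by some
linear map. -/
def multilinearOfSlots [DecidableEq ι] [Semiring R] [∀ i, AddCommMonoid (M i)]
    [∀ i, Module R (M i)] [AddCommMonoid N] [Module R N] (f : (∀ i, M i) → N)
    (h : ∀ (m : ∀ i, M i) (i : ι), ∃ g : M i →ₗ[R] N, ∀ u, f (Function.update m i u) = g u) :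
    MultilinearMap R M N :=
  MultilinearMap.mk' f
    (fun m i u v => by
      obtain ⟨g, hg⟩ := h m i
      simp only [hg, map_add])
    (fun m i c u => by
      obtain ⟨g, hg⟩ := h m i
      simp only [hg, map_smul])

theorem multilinear_congr_of_sub_mem [Ring R] [∀ i, AddCommGroup (M i)] [∀ i, Module R (M i)]
    [AddCommGroup N] [Module R N] [Finite ι] (f : MultilinearMap R M N)
    (S : ∀ i, Submodule R (M i)) (hf : ∀ m i, m i ∈ S i → f m = 0) {m m' : ∀ i, M i}
    (h : ∀ i, m i - m' i ∈ S i) : f m = f m' := by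
  classical
  have := Fintype.ofFinite ι
  have expand := f.map_add_univ m' (m - m')
  rw [add_sub_cancel, Finset.sum_eq_single Finset.univ, Finset.piecewise_univ] at expand
  · exact expand
  · intro s _ hs
    obtain ⟨i, hi⟩ : ∃ i, i ∉ s := by simpa [Finset.eq_univ_iff_forall] using hs
    refine hf _ i ?_
    simpa only [Finset.piecewise_eq_of_notMem s _ _ hi, Pi.sub_apply] using h i
  · exact fun hs => absurd (Finset.mem_univ _) hs

end Multilinear

theorem sum_alternating_eq_zero_of_presimplicial {M : Type*} [AddCommGroup M] {n : ℕ}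
    (H : Fin (n + 2) → Fin (n + 1) → M)
    (hH : ∀ i j : Fin (n + 1), j ≤ i → H i.succ j = H j.castSucc i) :
    ∑ i : Fin (n + 2), ∑ j : Fin (n + 1), (-1 : ℤ) ^ ((i : ℕ) + (j : ℕ)) • H i j = 0 := by
  have swap (i : Fin (n + 2)) (j : Fin (n + 1)) :
      H (i.succAbove j) (j.predAbove i) = H i j := by
    rcases lt_or_ge j.castSucc i with hji | hij
    · obtain ⟨i, rfl⟩ := Fin.exists_succ_eq.2 (Fin.ne_zero_of_lt hji)
      rw [Fin.succAbove_of_castSucc_lt _ _ hji, Fin.predAbove_of_castSucc_lt _ _ hji,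
        Fin.pred_succ, hH i j (Fin.le_castSucc_iff.2 hji)]
    · obtain ⟨i, rfl⟩ := Fin.exists_castSucc_eq.2 (hij.trans_lt (Fin.castSucc_lt_last j)).ne
      rw [Fin.succAbove_of_le_castSucc _ _ hij, Fin.predAbove_of_le_castSucc _ _ hij,
        Fin.castPred_castSucc, hH j i (Fin.castSucc_le_castSucc_iff.1 hij)]
  rw [← Fintype.sum_prod_type']
  refine Finset.sum_involution (fun p _ => (p.1.succAbove p.2, p.2.predAbove p.1))
    (fun p _ => ?_) (fun p _ _ h => ?_) (fun _ _ => Finset.mem_univ _) (fun p _ => ?_)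
  · rw [swap, Fin.neg_one_pow_succAbove_add_predAbove, neg_smul, add_neg_cancel]
  · exact Fin.succAbove_ne _ _ (congrArg Prod.fst h)
  · exact Prod.ext (Fin.succAbove_succAbove_predAbove _ _)
      (Fin.predAbove_predAbove_succAbove _ _)

section FaceEntries

variable {n : ℕ}

/-- The entries of the `i`-th Hochschild face of `x ⊗ a₀ ⊗ ⋯ ⊗ aₙ`: the extreme faces drop the
first or last entry, which is absorbed by `x` (see `faceCoeff`), and the face `0 < i ≤ n` multiplies
`aᵢ₋₁` with `aᵢ`. -/
def faceEntries {A : Type*} [Mul A] (i : Fin (n + 2)) (a : Fin (n + 1) → A) : Fin n → A := fun l =>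
  if (l : ℕ) + 1 < i then a l.castSucc
  else if (l : ℕ) + 1 = i then a l.castSucc * a l.succ
  else a l.succ

section Mul

variable {A : Type*} [Mul A]

theorem faceEntries_zero (a : Fin (n + 1) → A) : faceEntries 0 a = fun l => a l.succ := by
  funext l
  simp [faceEntries]

theorem faceEntries_last (a : Fin (n + 1) → A) :
    faceEntries (Fin.last (n + 1)) a = fun l => a l.castSucc := by
  funext l
  simp [faceEntries]

theorem exists_faceEntries_eq {i : Fin (n + 2)} {l : Fin (n + 1)} (hl : i ≠ l.castSucc)
    (hl' : i ≠ l.succ) (a : Fin (n + 1) → A) : ∃ p, faceEntries i a p = a l := by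
  rw [Ne, Fin.ext_iff, Fin.val_castSucc] at hl
  rw [Ne, Fin.ext_iff, Fin.val_succ] at hl'
  rcases lt_or_gt_of_ne hl with hil | hli
  · refine ⟨⟨l - 1, by omega⟩, ?_⟩
    simp only [faceEntries]
    rw [if_neg (by omega), if_neg (by omega)]
    exact congrArg a (Fin.ext (by simp only [Fin.val_succ]; omega))
  · refine ⟨⟨l, by omega⟩, ?_⟩
    simp only [faceEntries]
    rw [if_pos (by omega)]
    rfl

theorem faceEntries_eq_update_removeNth_succ (i : Fin (n + 1)) (a : Fin (n + 2) → A) :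
    faceEntries i.succ.castSucc a =
      Function.update (i.succ.removeNth a) i (a i.castSucc * a i.succ) := by
  funext l
  rcases lt_trichotomy l i with h | rfl | h
  · rw [Function.update_of_ne h.ne, Fin.removeNth_apply,
      Fin.succAbove_of_castSucc_lt _ _ (Fin.castSucc_lt_succ_iff.2 h.le)]
    exact if_pos (Nat.succ_lt_succ h)
  · rw [Function.update_self]
    simp [faceEntries]
  · rw [Function.update_of_ne h.ne', Fin.removeNth_apply,
      Fin.succAbove_of_le_castSucc _ _ (Fin.succ_le_castSucc_iff.2 h)]
    rw [Fin.lt_def] at h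
    simp only [faceEntries, Fin.val_castSucc, Fin.val_succ]
    rw [if_neg (by omega), if_neg (by omega)]

theorem faceEntries_eq_update_removeNth_castSucc (i : Fin (n + 1)) (a : Fin (n + 2) → A) :
    faceEntries i.castSucc.succ a =
      Function.update (i.castSucc.removeNth a) i (a i.castSucc * a i.succ) := by
  rw [Fin.succ_castSucc, faceEntries_eq_update_removeNth_succ]
  funext l
  rcases eq_or_ne l i with rfl | h
  · rw [Function.update_self, Function.update_self]
  · rw [Function.update_of_ne h, Function.update_of_ne h, Fin.removeNth_apply, Fin.removeNth_apply]
    congr 1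
    simp only [Fin.succAbove]
    grind

end Mul

theorem faceEntries_succ_castSucc {A : Type} [Mul A] (a : Fin (n + 1) → A) (j : Fin n) :
    faceEntries j.castSucc.succ a = mergeFun (fun y z => y * z) a j := by
  funext l
  simp [faceEntries, mergeFun]

theorem faceEntries_faceEntries {A : Type*} [Semigroup A] {i j : Fin (n + 2)} (hji : j ≤ i)
    (a : Fin (n + 2) → A) :
    faceEntries (A := A) j (faceEntries i.succ a) = faceEntries i (faceEntries j.castSucc a) := by
  funext l
  simp only [faceEntries, Fin.val_castSucc, Fin.val_succ, Fin.succ_castSucc]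
  rw [Fin.le_def] at hji
  split_ifs <;> first | rfl | omega | exact (mul_assoc _ _ _).symm

theorem exists_faceEntries_update {k A : Type*} [CommSemiring k] [Semiring A] [Algebra k A]
    {i : Fin (n + 2)} {l : Fin (n + 1)} (h0 : ¬(i = 0 ∧ l = 0))
    (hlast : ¬(i = Fin.last (n + 1) ∧ l = Fin.last n)) (a : Fin (n + 1) → A) :
    ∃ (p : Fin n) (g : A →ₗ[k] A), ∀ u,
      faceEntries i (Function.update a l u) = Function.update (faceEntries i a) p (g u) := by
  simp only [Fin.ext_iff, Fin.val_zero, Fin.val_last] at h0 hlast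
  simp only [funext_iff, faceEntries, Function.update_apply]
  rcases lt_or_ge (l : ℕ) i with hli | hil
  · obtain ⟨p, rfl⟩ : ∃ p : Fin n, p.castSucc = l := ⟨⟨l, by omega⟩, rfl⟩
    rw [Fin.val_castSucc] at hli
    rcases lt_or_eq_of_le (Nat.succ_le_of_lt hli) with h | h
    · exact ⟨p, LinearMap.id, fun u q => by grind [LinearMap.id_apply]⟩
    · exact ⟨p, LinearMap.mulRight k (a p.succ), fun u q => by grind [LinearMap.mulRight_apply]⟩
  · obtain ⟨p, rfl⟩ : ∃ p : Fin n, p.succ = l :=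
      ⟨⟨l - 1, by omega⟩, Fin.ext (by simp only [Fin.val_succ]; omega)⟩
    rw [Fin.val_succ] at hil
    rcases lt_or_eq_of_le hil with h | h
    · exact ⟨p, LinearMap.id, fun u q => by grind [LinearMap.id_apply]⟩
    · exact ⟨p, LinearMap.mulLeft k (a p.castSucc), fun u q => by
        grind [LinearMap.mulLeft_apply]⟩

end FaceEntries

section FaceCoeff

variable (k : Type*) [CommSemiring k] {A : Type*} [Semiring A] [Algebra k A]
  (X : Type*) [AddCommMonoid X] [Module k X] [Module A X] [Module Aᵐᵒᵖ X]
  [IsScalarTower k A X] [IsScalarTower k Aᵐᵒᵖ X] {n : ℕ}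

/-- The action on the coefficient `x` of the `i`-th Hochschild face of `x ⊗ a₀ ⊗ ⋯ ⊗ aₙ`. -/
def faceCoeff (i : Fin (n + 2)) (a : Fin (n + 1) → A) : X →ₗ[k] X :=
  if i = 0 then Algebra.lsmul k k X (op (a 0))
  else if i = Fin.last (n + 1) then Algebra.lsmul k k X (a (Fin.last n))
  else LinearMap.id

theorem faceCoeff_zero (a : Fin (n + 1) → A) :
    faceCoeff k X 0 a = Algebra.lsmul k k X (op (a 0)) :=
  if_pos rfl

theorem faceCoeff_last (a : Fin (n + 1) → A) :
    faceCoeff k X (Fin.last (n + 1)) a = Algebra.lsmul k k X (a (Fin.last n)) :=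
  (if_neg Fin.last_pos.ne').trans (if_pos rfl)

theorem faceCoeff_of_ne {i : Fin (n + 2)} (h0 : i ≠ 0) (hlast : i ≠ Fin.last (n + 1))
    (a : Fin (n + 1) → A) : faceCoeff k X i a = LinearMap.id :=
  (if_neg h0).trans (if_neg hlast)

theorem faceCoeff_update {i : Fin (n + 2)} {l : Fin (n + 1)} (h0 : ¬(i = 0 ∧ l = 0))
    (hlast : ¬(i = Fin.last (n + 1) ∧ l = Fin.last n)) (a : Fin (n + 1) → A) (u : A) :
    faceCoeff k X i (Function.update a l u) = faceCoeff k X i a := by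
  simp only [faceCoeff]
  split_ifs with hi0 hi
  · rw [Function.update_of_ne fun h => h0 ⟨hi0, h.symm⟩]
  · rw [Function.update_of_ne fun h => hlast ⟨hi, h.symm⟩]
  · rfl

theorem faceCoeff_zero_comp_faceCoeff_succ [SMulCommClass A Aᵐᵒᵖ X] (i : Fin (n + 2))
    (a : Fin (n + 2) → A) :
    faceCoeff k X 0 (faceEntries i.succ a) ∘ₗ faceCoeff k X i.succ a =
      faceCoeff k X i (faceEntries 0 a) ∘ₗ faceCoeff k X 0 a := by
  ext x
  rcases eq_or_ne i (Fin.last (n + 1)) with rfl | hlast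
  · simp only [Fin.succ_last, faceCoeff_last, faceCoeff_zero, faceEntries_last, faceEntries_zero]
    exact (smul_comm _ _ x).symm
  · rw [faceCoeff_of_ne k X i.succ_ne_zero (by rwa [← Fin.succ_last, Ne, Fin.succ_inj])]
    simp only [faceCoeff_zero]
    rcases eq_or_ne i 0 with rfl | h0
    · simp only [faceCoeff_zero, faceEntries_zero]
      exact mul_smul (op (a 1)) (op (a 0)) x
    · have keep : faceEntries i.succ a 0 = a 0 :=
        if_pos (Nat.succ_lt_succ (Fin.pos_of_ne_zero h0))
      rw [faceCoeff_of_ne k X h0 hlast, keep]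
      rfl

theorem faceCoeff_comp_faceCoeff_castSucc {i j : Fin (n + 2)} (hji : j ≤ i) (hj : j ≠ 0)
    (a : Fin (n + 2) → A) :
    faceCoeff k X j (faceEntries i.succ a) ∘ₗ faceCoeff k X i.succ a =
      faceCoeff k X i (faceEntries j.castSucc a) ∘ₗ faceCoeff k X j.castSucc a := by
  have hi : i ≠ 0 := fun h => hj (Fin.le_zero_iff.1 (h ▸ hji))
  ext x
  rw [faceCoeff_of_ne k X (i := j.castSucc) (Fin.castSucc_ne_zero_iff.2 hj)
    (Fin.castSucc_lt_last j).ne]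
  rcases eq_or_ne i (Fin.last (n + 1)) with rfl | hilast
  · simp only [Fin.succ_last, faceCoeff_last, faceEntries_last]
    rcases eq_or_ne j (Fin.last (n + 1)) with rfl | hjlast
    · have merge : faceEntries (Fin.last (n + 1)).castSucc a (Fin.last n) =
          a (Fin.last n).castSucc * a (Fin.last (n + 1)) := by
        simp [faceEntries]
      rw [faceCoeff_last, merge]
      exact (mul_smul _ _ x).symm
    · have keep : faceEntries j.castSucc a (Fin.last n) = a (Fin.last (n + 1)) := by
        have hlt := Fin.lt_def.1 (Fin.lt_last_iff_ne_last.2 hjlast)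
        simp only [faceEntries, Fin.val_last, Fin.val_castSucc] at hlt ⊢
        rw [if_neg hlt.not_gt, if_neg hlt.ne', Fin.succ_last]
      rw [faceCoeff_of_ne k X hj hjlast, keep]
      rfl
  · have hjlast : j ≠ Fin.last (n + 1) := (hji.trans_lt (Fin.lt_last_iff_ne_last.2 hilast)).ne
    rw [faceCoeff_of_ne k X i.succ_ne_zero (by rwa [← Fin.succ_last, Ne, Fin.succ_inj]),
      faceCoeff_of_ne k X hi hilast, faceCoeff_of_ne k X hj hjlast]

theorem faceCoeff_comp_faceCoeff [SMulCommClass A Aᵐᵒᵖ X] {i j : Fin (n + 2)} (hji : j ≤ i)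
    (a : Fin (n + 2) → A) :
    faceCoeff k X j (faceEntries i.succ a) ∘ₗ faceCoeff k X i.succ a =
      faceCoeff k X i (faceEntries j.castSucc a) ∘ₗ faceCoeff k X j.castSucc a := by
  rcases eq_or_ne j 0 with rfl | hj
  · exact faceCoeff_zero_comp_faceCoeff_succ k X i a
  · exact faceCoeff_comp_faceCoeff_castSucc k X hji hj a

end FaceCoeff

section PureChain

variable (k : Type) [Field k] (A : Type) [Ring A] [Algebra k A]
  (X : Type) [AddCommGroup X] [Module k X] {n : ℕ}

/-- The multilinear form `(a₁, …, aₙ) ↦ (x ↦ x ⊗ a₁ ⊗ ⋯ ⊗ aₙ)`, which treats degree `0` (where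
`CH` is `X` itself) and positive degrees uniformly. -/
noncomputable def pureChain :
    ∀ n, MultilinearMap k (fun _ : Fin n => A) (X →ₗ[k] CH k A X n)
  | 0 => MultilinearMap.constOfIsEmpty k (fun _ => A) LinearMap.id
  | n + 1 => (TensorProduct.mk k X (⨂[k] _ : Fin (n + 1), A)).flip.compMultilinearMap
      (PiTensorProduct.tprod k)

theorem pureChain_succ (a : Fin (n + 1) → A) (x : X) :
    pureChain k A X (n + 1) a x = x ⊗ₜ[k] tprod k a := rfl

theorem CH_hom_ext {N : Type*} [AddCommMonoid N] [Module k N] {f g : CH k A X n →ₗ[k] N}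
    (h : ∀ a x, f (pureChain k A X n a x) = g (pureChain k A X n a x)) : f = g := by
  cases n with
  | zero => exact LinearMap.ext fun x => h Fin.elim0 x
  | succ n =>
    exact TensorProduct.ext <| LinearMap.ext fun x => PiTensorProduct.ext <|
      MultilinearMap.ext fun a => h a x

end PureChain

section Face

variable (k : Type) [Field k] (A : Type) [Ring A] [Algebra k A]
  (X : Type) [AddCommGroup X] [Module k X] [Module A X] [Module Aᵐᵒᵖ X]
  [IsScalarTower k A X] [IsScalarTower k Aᵐᵒᵖ X] {n : ℕ}

theorem exists_pureChain_faceEntries_update (i : Fin (n + 2)) (a : Fin (n + 1) → A)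
    (l : Fin (n + 1)) :
    ∃ g : A →ₗ[k] (X →ₗ[k] CH k A X n), ∀ u,
      pureChain k A X n (faceEntries i (Function.update a l u)) ∘ₗ
        faceCoeff k X i (Function.update a l u) = g u := by
  by_cases h0 : i = 0 ∧ l = 0
  · obtain ⟨rfl, rfl⟩ := h0
    refine ⟨LinearMap.llcomp k X X _ (pureChain k A X n (faceEntries 0 a)) ∘ₗ
      (Algebra.lsmul k k X).toLinearMap ∘ₗ (opLinearEquiv k).toLinearMap, fun u => ?_⟩
    simp only [faceEntries_zero, faceCoeff_zero, Function.update_self,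
      Function.update_of_ne (Fin.succ_ne_zero _)]
    rfl
  by_cases hlast : i = Fin.last (n + 1) ∧ l = Fin.last n
  · obtain ⟨rfl, rfl⟩ := hlast
    refine ⟨LinearMap.llcomp k X X _ (pureChain k A X n (faceEntries (Fin.last _) a)) ∘ₗ
      (Algebra.lsmul k k X).toLinearMap, fun u => ?_⟩
    simp only [faceEntries_last, faceCoeff_last, Function.update_self,
      Function.update_of_ne (Fin.castSucc_lt_last _).ne]
    rfl
  · obtain ⟨p, g, hg⟩ := exists_faceEntries_update (k := k) h0 hlast a
    refine ⟨LinearMap.lcomp k _ (faceCoeff k X i a) ∘ₗ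
      (pureChain k A X n).toLinearMap (faceEntries i a) p ∘ₗ g, fun u => ?_⟩
    rw [hg, faceCoeff_update k X h0 hlast]
    rfl

/-- The `i`-th face map of the Hochschild complex,
`∂ᵢ(x ⊗ a₁ ⊗ ⋯ ⊗ aₙ₊₁) = x ⊗ ⋯ ⊗ aᵢaᵢ₊₁ ⊗ ⋯`, with `x a₁` and `aₙ₊₁ x` in the extreme cases. -/
noncomputable def face (n : ℕ) (i : Fin (n + 2)) : CH k A X (n + 1) →ₗ[k] CH k A X n :=
  TensorProduct.lift <| LinearMap.flip <| PiTensorProduct.lift <|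
    multilinearOfSlots (fun a => pureChain k A X n (faceEntries i a) ∘ₗ faceCoeff k X i a)
      (exists_pureChain_faceEntries_update k A X i)

theorem face_pureChain (i : Fin (n + 2)) (a : Fin (n + 1) → A) (x : X) :
    face k A X n i (pureChain k A X (n + 1) a x) =
      pureChain k A X n (faceEntries i a) (faceCoeff k X i a x) := by
  rw [pureChain_succ]
  refine (TensorProduct.lift.tmul _ _).trans ?_
  rw [LinearMap.flip_apply, PiTensorProduct.lift.tprod]
  rfl

theorem face_comp_face [SMulCommClass A Aᵐᵒᵖ X] {i j : Fin (n + 2)} (hji : j ≤ i) :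
    face k A X n j ∘ₗ face k A X (n + 1) i.succ =
      face k A X n i ∘ₗ face k A X (n + 1) j.castSucc := by
  refine CH_hom_ext k A X fun a x => ?_
  simp only [LinearMap.comp_apply, face_pureChain]
  rw [faceEntries_faceEntries hji]
  exact congrArg _ (LinearMap.congr_fun (faceCoeff_comp_faceCoeff k X hji a) x)

/-- The Hochschild differential `b = ∑ (-1)ⁱ ∂ᵢ`. -/
noncomputable def hochDiff (n : ℕ) : CH k A X (n + 1) →ₗ[k] CH k A X n :=
  ∑ i : Fin (n + 2), (-1 : ℤ) ^ (i : ℕ) • face k A X n i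

theorem hochDiff_comp_hochDiff [SMulCommClass A Aᵐᵒᵖ X] (n : ℕ) :
    hochDiff k A X n ∘ₗ hochDiff k A X (n + 1) = 0 := by
  have expand : hochDiff k A X n ∘ₗ hochDiff k A X (n + 1) =
      ∑ i : Fin (n + 3), ∑ j : Fin (n + 2),
        (-1 : ℤ) ^ ((i : ℕ) + (j : ℕ)) • (face k A X n j ∘ₗ face k A X (n + 1) i) := by
    ext w
    simp only [hochDiff, LinearMap.comp_apply, LinearMap.sum_apply, LinearMap.smul_apply, map_sum,
      map_zsmul, Finset.smul_sum, smul_smul, pow_add]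
  rw [expand]
  exact sum_alternating_eq_zero_of_presimplicial _ fun i j hji => face_comp_face k A X hji

theorem hochDiff_pureChain (a : Fin (n + 1) → A) (x : X) :
    hochDiff k A X n (pureChain k A X (n + 1) a x) = ∑ i : Fin (n + 2),
      (-1 : ℤ) ^ (i : ℕ) • pureChain k A X n (faceEntries i a) (faceCoeff k X i a x) := by
  simp only [hochDiff, LinearMap.sum_apply, LinearMap.smul_apply, face_pureChain]

theorem isHochschildDiff_hochDiff : IsHochschildDiff k A X (hochDiff k A X) := by
  refine ⟨fun x a => ?_, fun n x a => ?_⟩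
  · refine (hochDiff_pureChain k A X a x).trans ?_
    rw [Fin.sum_univ_two, faceCoeff_zero, show (1 : Fin 2) = Fin.last 1 from rfl, faceCoeff_last,
      Fin.val_zero, pow_zero, one_smul, Fin.val_last, pow_one, neg_one_smul, ← sub_eq_add_neg]
    rfl
  · have inner (j : Fin (n + 1)) : faceCoeff k X j.castSucc.succ a = LinearMap.id :=
      faceCoeff_of_ne k X (Fin.succ_ne_zero _) (Fin.succ_castSucc j ▸ Fin.castSucc_lt_last _).ne a
    refine (hochDiff_pureChain k A X a x).trans ?_
    rw [Fin.sum_univ_succ, Fin.sum_univ_castSucc, ← add_assoc, Fin.val_zero, pow_zero, one_smul]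
    simp only [pureChain_succ, faceEntries_zero, faceCoeff_zero, faceEntries_succ_castSucc, inner,
      Fin.succ_last, faceEntries_last, faceCoeff_last]
    rfl

theorem map_hochDiff_of_mem {N : Type*} [AddCommGroup N] [Module k N] {f : CH k A X n →ₗ[k] N}
    {S : Set A} (hf : ∀ a x p, a p ∈ S → f (pureChain k A X n a x) = 0) {a : Fin (n + 1) → A}
    {l : Fin (n + 1)} (hl : a l ∈ S) (x : X) :
    f (hochDiff k A X n (pureChain k A X (n + 1) a x)) = (-1 : ℤ) ^ (l : ℕ) •
      (f (face k A X n l.castSucc (pureChain k A X (n + 1) a x)) -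
        f (face k A X n l.succ (pureChain k A X (n + 1) a x))) := by
  simp only [hochDiff, LinearMap.sum_apply, LinearMap.smul_apply, map_sum, map_zsmul]
  rw [Fintype.sum_eq_add l.castSucc l.succ Fin.castSucc_lt_succ.ne]
  · rw [Fin.val_castSucc, Fin.val_succ, pow_succ, mul_neg_one, neg_smul, smul_sub, sub_eq_add_neg]
  · rintro i ⟨hi, hi'⟩
    obtain ⟨p, hp⟩ := exists_faceEntries_eq hi hi' a
    rw [face_pureChain, hf _ _ p (hp ▸ hl), smul_zero]

end Face

section Projection

variable (k : Type) [Field k] (A : Type) [Ring A] [Algebra k A] (B : Subalgebra k A)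
  (X : Type) [AddCommGroup X] [Module k X] {n : ℕ}

/-- The map `X ⊗ A^{⊗(n+1)} → X ⊗ (A/B)^{⊗(n+1)}` induced by `π`, through which `κ` factors. -/
noncomputable def projTensor (n : ℕ) :
    CH k A X (n + 1) →ₗ[k] X ⊗[k] (⨂[k] _ : Fin (n + 1), QM k A B) :=
  TensorProduct.map LinearMap.id (PiTensorProduct.map fun _ => πQ k A B)

theorem projTensor_pureChain (a : Fin (n + 1) → A) (x : X) :
    projTensor k A B X n (pureChain k A X (n + 1) a x) = x ⊗ₜ[k] tprod k (πQ k A B ∘ a) := by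
  refine (TensorProduct.map_tmul _ _ _ _).trans ?_
  rw [PiTensorProduct.map_tprod]
  rfl

theorem exists_lift_insertNth (l : Fin (n + 2)) (b : A) (α : Fin (n + 1) → QM k A B) :
    ∃ a : Fin (n + 2) → A, a l = b ∧ πQ k A B ∘ l.removeNth a = α := by
  obtain ⟨c, rfl⟩ := (Submodule.mkQ_surjective (Subalgebra.toSubmodule B)).comp_left α
  exact ⟨l.insertNth b c, Fin.insertNth_apply_same .., by rw [Fin.removeNth_insertNth]; rfl⟩

end Projection

section Relations

variable (k : Type) [Field k] (A : Type) [Ring A] [Algebra k A] (B : Subalgebra k A)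
  (X : Type) [AddCommGroup X] [Module k X] [Module A X] [Module Aᵐᵒᵖ X]
  [IsScalarTower k A X] [IsScalarTower k Aᵐᵒᵖ X] {n : ℕ}

theorem projTensor_face_zero {b : B} {a : Fin (n + 2) → A} (hb : a 0 = b) (x : X) :
    projTensor k A B X n (face k A X (n + 1) 0 (pureChain k A X (n + 2) a x)) =
      (op (b : A) • x) ⊗ₜ[k] tprod k (πQ k A B ∘ Fin.removeNth 0 a) := by
  rw [face_pureChain, projTensor_pureChain, faceEntries_zero, faceCoeff_zero, hb]
  rfl

theorem projTensor_face_last {b : B} {a : Fin (n + 2) → A} (hb : a (Fin.last _) = b) (x : X) :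
    projTensor k A B X n (face k A X (n + 1) (Fin.last _) (pureChain k A X (n + 2) a x)) =
      ((b : A) • x) ⊗ₜ[k] tprod k (πQ k A B ∘ Fin.removeNth (Fin.last _) a) := by
  rw [face_pureChain, projTensor_pureChain, faceEntries_last, faceCoeff_last, hb,
    Fin.removeNth_last]
  rfl

theorem projTensor_face_succ_castSucc (i : Fin (n + 1)) {b : B} {a : Fin (n + 2) → A}
    (hb : a i.succ = b) (x : X) :
    projTensor k A B X n (face k A X (n + 1) i.succ.castSucc (pureChain k A X (n + 2) a x)) =
      x ⊗ₜ[k] tprod k (Function.update (πQ k A B ∘ i.succ.removeNth a) i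
        (Qr k A B b ((πQ k A B ∘ i.succ.removeNth a) i))) := by
  rw [face_pureChain, projTensor_pureChain, faceEntries_eq_update_removeNth_succ,
    faceCoeff_of_ne k X (by simp) (Fin.castSucc_lt_last _).ne, Function.comp_update, hb]
  simp only [Function.comp_apply, Fin.removeNth_apply, Fin.succAbove_succ_self]
  rfl

theorem projTensor_face_castSucc_succ (i : Fin (n + 1)) {b : B} {a : Fin (n + 2) → A}
    (hb : a i.castSucc = b) (x : X) :
    projTensor k A B X n (face k A X (n + 1) i.castSucc.succ (pureChain k A X (n + 2) a x)) =
      x ⊗ₜ[k] tprod k (Function.update (πQ k A B ∘ i.castSucc.removeNth a) i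
        (Ql k A B b ((πQ k A B ∘ i.castSucc.removeNth a) i))) := by
  rw [face_pureChain, projTensor_pureChain, faceEntries_eq_update_removeNth_castSucc,
    faceCoeff_of_ne k X (Fin.succ_ne_zero _) (Fin.succ_castSucc i ▸ Fin.castSucc_lt_last _).ne,
    Function.comp_update, hb]
  simp only [Function.comp_apply, Fin.removeNth_apply, Fin.succAbove_castSucc_self]
  rfl

variable {k A} in
/-- The difference of the images in `X ⊗ (A/B)^{⊗(n+1)}` of the two faces of `x ⊗ a₀ ⊗ ⋯ ⊗ aₙ₊₁`
that merge the entry `a l` with its left and with its right neighbour. -/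
noncomputable def mergeDefect (l : Fin (n + 2)) (a : Fin (n + 2) → A) (x : X) :
    X ⊗[k] (⨂[k] _ : Fin (n + 1), QM k A B) :=
  projTensor k A B X n (face k A X (n + 1) l.castSucc (pureChain k A X (n + 2) a x)) -
    projTensor k A B X n (face k A X (n + 1) l.succ (pureChain k A X (n + 2) a x))

theorem mergeDefect_zero {b : B} {a : Fin (n + 2) → A} (hb : a 0 = b) (x : X) :
    mergeDefect B X 0 a x = (op (b : A) • x) ⊗ₜ[k] tprod k (πQ k A B ∘ Fin.removeNth 0 a) -
      x ⊗ₜ[k] tprod k (Function.update (πQ k A B ∘ Fin.removeNth 0 a) 0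
        (Ql k A B b ((πQ k A B ∘ Fin.removeNth 0 a) 0))) := by
  rw [mergeDefect, Fin.castSucc_zero, projTensor_face_zero k A B X hb, ← Fin.castSucc_zero,
    projTensor_face_castSucc_succ k A B X 0 hb]

theorem mergeDefect_succ_castSucc (i : Fin n) {b : B} {a : Fin (n + 2) → A}
    (hb : a i.succ.castSucc = b) (x : X) :
    mergeDefect B X i.succ.castSucc a x =
      x ⊗ₜ[k] tprod k (Function.update (πQ k A B ∘ i.succ.castSucc.removeNth a) i.castSucc
        (Qr k A B b ((πQ k A B ∘ i.succ.castSucc.removeNth a) i.castSucc))) -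
      x ⊗ₜ[k] tprod k (Function.update (πQ k A B ∘ i.succ.castSucc.removeNth a) i.succ
        (Ql k A B b ((πQ k A B ∘ i.succ.castSucc.removeNth a) i.succ))) := by
  rw [mergeDefect, projTensor_face_castSucc_succ k A B X i.succ hb]
  rw [← Fin.succ_castSucc] at hb ⊢
  rw [projTensor_face_succ_castSucc k A B X i.castSucc hb]

theorem mergeDefect_last {b : B} {a : Fin (n + 2) → A} (hb : a (Fin.last _) = b) (x : X) :
    mergeDefect B X (Fin.last _) a x =
      x ⊗ₜ[k] tprod k (Function.update (πQ k A B ∘ (Fin.last _).removeNth a) (Fin.last n)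
        (Qr k A B b ((πQ k A B ∘ (Fin.last _).removeNth a) (Fin.last n)))) -
      ((b : A) • x) ⊗ₜ[k] tprod k (πQ k A B ∘ (Fin.last _).removeNth a) := by
  rw [mergeDefect, Fin.succ_last, projTensor_face_last k A B X hb]
  rw [← Fin.succ_last] at hb ⊢
  rw [projTensor_face_succ_castSucc k A B X (Fin.last n) hb]

theorem relRel_eq_span_mergeDefect : relRel k A B X n = Submodule.span k
    {z | ∃ (l : Fin (n + 2)) (a : Fin (n + 2) → A) (x : X),
      a l ∈ B ∧ z = mergeDefect B X l a x} := by
  rw [relRel]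
  congr 1
  ext z
  constructor
  · rintro ((⟨x, α, b, rfl⟩ | ⟨x, α, b, i, rfl⟩) | ⟨x, α, b, rfl⟩)
    · obtain ⟨a, hb, rfl⟩ := exists_lift_insertNth k A B 0 b α
      exact ⟨0, a, x, hb ▸ b.2, (mergeDefect_zero k A B X hb x).symm⟩
    · obtain ⟨a, hb, rfl⟩ := exists_lift_insertNth k A B i.succ.castSucc b α
      exact ⟨_, a, x, hb ▸ b.2, (mergeDefect_succ_castSucc k A B X i hb x).symm⟩
    · obtain ⟨a, hb, rfl⟩ := exists_lift_insertNth k A B (Fin.last _) b α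
      exact ⟨_, a, x, hb ▸ b.2, (mergeDefect_last k A B X hb x).symm⟩
  · rintro ⟨l, a, x, hl, rfl⟩
    induction l using Fin.cases with
    | zero => exact Or.inl (Or.inl ⟨x, _, ⟨a 0, hl⟩, mergeDefect_zero k A B X rfl x⟩)
    | succ l =>
      induction l using Fin.lastCases with
      | last => exact Or.inr ⟨x, _, ⟨_, hl⟩, mergeDefect_last k A B X rfl x⟩
      | cast i =>
        exact Or.inl (Or.inr ⟨x, _, ⟨_, hl⟩, i, mergeDefect_succ_castSucc k A B X i rfl x⟩)

end Relations

section Lift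

variable {k : Type} [Field k] {A : Type} [Ring A] [Algebra k A] (B : Subalgebra k A)
  (X : Type) [AddCommGroup X] [Module k X]

/-- The map `X ⊗ (A/B)^{⊗(n+1)} → X ⊗ A^{⊗(n+1)}` induced by a linear map `σ : A/B → A`. -/
noncomputable def liftTensor (σ : QM k A B →ₗ[k] A) (n : ℕ) :
    X ⊗[k] (⨂[k] _ : Fin (n + 1), QM k A B) →ₗ[k] CH k A X (n + 1) :=
  TensorProduct.map LinearMap.id (PiTensorProduct.map fun _ => σ)

theorem liftTensor_tmul_tprod (σ : QM k A B →ₗ[k] A) {n : ℕ} (α : Fin (n + 1) → QM k A B) (x : X) :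
    liftTensor B X σ n (x ⊗ₜ[k] tprod k α) = pureChain k A X (n + 1) (σ ∘ α) x := by
  refine (TensorProduct.map_tmul _ _ _ _).trans ?_
  rw [PiTensorProduct.map_tprod]
  rfl

theorem projTensor_surjective (n : ℕ) : Function.Surjective (projTensor k A B X n) := by
  refine TensorProduct.map_surjective Function.surjective_id ?_
  obtain ⟨σ, hσ⟩ := (πQ k A B).exists_rightInverse_of_surjective (Submodule.range_mkQ _)
  refine Function.RightInverse.surjective (g := PiTensorProduct.map fun _ => σ) fun t => ?_
  rw [← LinearMap.comp_apply, ← PiTensorProduct.map_comp]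
  simp only [hσ, PiTensorProduct.map_id, LinearMap.id_apply]

end Lift

section Kappa

variable {k : Type} [Field k] {A : Type} [Ring A] [Algebra k A] (B : Subalgebra k A)
  {X : Type} [AddCommGroup X] [Module k X] [Module A X] [Module Aᵐᵒᵖ X] {n : ℕ}

theorem κmap_pureChain_succ (a : Fin (n + 1) → A) (x : X) :
    κmap k A B X (n + 1) (pureChain k A X (n + 1) a x) =
      mkRC k A B X n (x ⊗ₜ[k] tprod k (πQ k A B ∘ a)) :=
  congrArg (mkRC k A B X n) (projTensor_pureChain k A B X a x)

theorem κmap_pureChain_of_mem (a : Fin n → A) (x : X) (p : Fin n) (hp : a p ∈ B) :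
    κmap k A B X n (pureChain k A X n a x) = 0 := by
  cases n with
  | zero => exact p.elim0
  | succ n =>
    have hzero : (πQ k A B ∘ a) p = 0 := (Submodule.Quotient.mk_eq_zero _).2 hp
    have htprod : tprod k (πQ k A B ∘ a) = 0 := MultilinearMap.map_coord_zero _ p hzero
    rw [κmap_pureChain_succ, htprod, TensorProduct.tmul_zero, map_zero]

variable (X) in
theorem κmap_surjective : ∀ n, Function.Surjective (κmap k A B X n)
  | 0 => Submodule.mkQ_surjective _
  | n + 1 => (Submodule.mkQ_surjective (relRel k A B X n)).comp (projTensor_surjective B X n)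

theorem projTensor_hochSucc {σ : QM k A B →ₗ[k] A} (hσ : (πQ k A B).comp σ = LinearMap.id)
    (α : Fin (n + 2) → QM k A B) (x : X) :
    projTensor k A B X n (hochSucc k A X n x (σ ∘ α)) = relSucc k A B X σ n x α := by
  have πσ (y : QM k A B) : πQ k A B (σ y) = y := LinearMap.congr_fun hσ y
  have merge (j : Fin (n + 1)) : πQ k A B ∘ mergeFun (fun y z => y * z) (σ ∘ α) j =
      mergeFun (fun y z => πQ k A B (σ y * σ z)) α j := by
    ext i
    simp only [mergeFun, Function.comp_apply, apply_ite (πQ k A B), πσ]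
  suffices expand : ∀ f : X ⊗[k] (⨂[k] _ : Fin (n + 1), A) →ₗ[k]
        X ⊗[k] (⨂[k] _ : Fin (n + 1), QM k A B),
      (∀ y a, f (y ⊗ₜ[k] tprod k a) = y ⊗ₜ[k] tprod k (πQ k A B ∘ a)) →
        f (hochSucc k A X n x (σ ∘ α)) = relSucc k A B X σ n x α from
    expand (projTensor k A B X n) fun y a => projTensor_pureChain k A B X a y
  intro f hf
  unfold hochSucc relSucc
  simp only [map_add, map_sum, map_zsmul, hf, merge]
  simp only [Function.comp_def, πσ]

end Kappa

section RelativeDifferential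

variable {k : Type} [Field k] {A : Type} [Ring A] [Algebra k A] (B : Subalgebra k A)
  {X : Type} [AddCommGroup X] [Module k X] [Module A X] [Module Aᵐᵒᵖ X]
  [IsScalarTower k A X] [IsScalarTower k Aᵐᵒᵖ X] {n : ℕ}

theorem κmap_face_castSucc_eq_face_succ {a : Fin (n + 1) → A} {l : Fin (n + 1)} (hl : a l ∈ B)
    (x : X) :
    κmap k A B X n (face k A X n l.castSucc (pureChain k A X (n + 1) a x)) =
      κmap k A B X n (face k A X n l.succ (pureChain k A X (n + 1) a x)) := by
  cases n with
  | zero =>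
    obtain rfl := Fin.fin_one_eq_zero l
    have hcomm : a 0 • x - op (a 0) • x ∈ commRel k A B X :=
      Submodule.subset_span ⟨⟨a 0, hl⟩, x, rfl⟩
    rw [face_pureChain, face_pureChain, Fin.castSucc_zero, faceCoeff_zero,
      show (0 : Fin 1).succ = Fin.last 1 from rfl, faceCoeff_last]
    exact ((Submodule.Quotient.eq _).2 hcomm).symm
  | succ n =>
    refine (Submodule.Quotient.eq (relRel k A B X n)).2 ?_
    rw [relRel_eq_span_mergeDefect]
    exact Submodule.subset_span ⟨l, a, x, hl, rfl⟩

theorem κmap_hochDiff_pureChain_of_mem (a : Fin (n + 1) → A) (x : X) (l : Fin (n + 1))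
    (hl : a l ∈ B) : κmap k A B X n (hochDiff k A X n (pureChain k A X (n + 1) a x)) = 0 := by
  rw [map_hochDiff_of_mem k A X (S := B) (κmap_pureChain_of_mem B) hl,
    κmap_face_castSucc_eq_face_succ B hl, sub_self, smul_zero]

theorem κmap_hochDiff_pureChain_congr {a a' : Fin (n + 1) → A} (h : πQ k A B ∘ a = πQ k A B ∘ a')
    (x : X) : κmap k A B X n (hochDiff k A X n (pureChain k A X (n + 1) a x)) =
      κmap k A B X n (hochDiff k A X n (pureChain k A X (n + 1) a' x)) :=
  multilinear_congr_of_sub_mem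
    ((κmap k A B X n ∘ₗ hochDiff k A X n ∘ₗ LinearMap.applyₗ x).compMultilinearMap
      (pureChain k A X (n + 1)))
    (fun _ => Subalgebra.toSubmodule B) (fun a l hl => κmap_hochDiff_pureChain_of_mem B a x l hl)
    fun l => (Submodule.Quotient.eq _).1 (congrFun h l)

theorem κmap_hochDiff_liftTensor_projTensor {σ : QM k A B →ₗ[k] A}
    (hσ : (πQ k A B).comp σ = LinearMap.id) (w : CH k A X (n + 1)) :
    κmap k A B X n (hochDiff k A X n (liftTensor B X σ n (projTensor k A B X n w))) =
      κmap k A B X n (hochDiff k A X n w) := by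
  suffices κmap k A B X n ∘ₗ hochDiff k A X n ∘ₗ liftTensor B X σ n ∘ₗ projTensor k A B X n =
      κmap k A B X n ∘ₗ hochDiff k A X n from LinearMap.congr_fun this w
  refine CH_hom_ext k A X fun a x => ?_
  simp only [LinearMap.comp_apply, projTensor_pureChain, liftTensor_tmul_tprod]
  exact κmap_hochDiff_pureChain_congr B
    (funext fun i => LinearMap.congr_fun hσ (πQ k A B (a i))) x

theorem isRelDiff_iff_κmap_pureChain {σ : QM k A B →ₗ[k] A}
    (hσ : (πQ k A B).comp σ = LinearMap.id) {d : ∀ n, RC k A B X (n + 1) →ₗ[k] RC k A B X n} :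
    IsRelDiff k A B X σ d ↔ ∀ n (x : X) (α : Fin (n + 1) → QM k A B),
      d n (κmap k A B X (n + 1) (pureChain k A X (n + 1) (σ ∘ α) x)) =
        κmap k A B X n (hochDiff k A X n (pureChain k A X (n + 1) (σ ∘ α) x)) := by
  have source {n : ℕ} (x : X) (α : Fin (n + 1) → QM k A B) :
      κmap k A B X (n + 1) (pureChain k A X (n + 1) (σ ∘ α) x) =
        mkRC k A B X n (x ⊗ₜ[k] tprod k α) := by
    rw [κmap_pureChain_succ, ← Function.comp_assoc, ← LinearMap.coe_comp, hσ]
    rfl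
  have target_zero (x : X) (α : Fin 1 → QM k A B) :
      κmap k A B X 0 (hochDiff k A X 0 (pureChain k A X 1 (σ ∘ α) x)) =
        mkXB k A B X (relZero k A B X σ x α) :=
    congrArg (κmap k A B X 0) ((isHochschildDiff_hochDiff k A X).1 x (σ ∘ α))
  have target_succ (n : ℕ) (x : X) (α : Fin (n + 2) → QM k A B) :
      κmap k A B X (n + 1) (hochDiff k A X (n + 1) (pureChain k A X (n + 2) (σ ∘ α) x)) =
        mkRC k A B X n (relSucc k A B X σ n x α) :=
    (congrArg (κmap k A B X (n + 1)) ((isHochschildDiff_hochDiff k A X).2 n x (σ ∘ α))).trans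
      (congrArg (mkRC k A B X n) (projTensor_hochSucc B hσ α x))
  rw [← Nat.and_forall_add_one]
  simp only [source, target_zero, target_succ]
  rfl

theorem isRelDiff_iff_comp_κmap {σ : QM k A B →ₗ[k] A} (hσ : (πQ k A B).comp σ = LinearMap.id)
    {d : ∀ n, RC k A B X (n + 1) →ₗ[k] RC k A B X n} :
    IsRelDiff k A B X σ d ↔
      ∀ n, d n ∘ₗ κmap k A B X (n + 1) = κmap k A B X n ∘ₗ hochDiff k A X n := by
  rw [isRelDiff_iff_κmap_pureChain B hσ]
  refine forall_congr' fun n => ⟨fun hd => CH_hom_ext k A X fun a x => ?_,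
    fun hd x α => LinearMap.congr_fun hd _⟩
  have hπ : πQ k A B ∘ σ ∘ πQ k A B ∘ a = πQ k A B ∘ a :=
    funext fun i => LinearMap.congr_fun hσ (πQ k A B (a i))
  have hd := hd x (πQ k A B ∘ a)
  rw [κmap_pureChain_succ, hπ, ← κmap_pureChain_succ, κmap_hochDiff_pureChain_congr B hπ] at hd
  exact hd

variable [SMulCommClass A Aᵐᵒᵖ X]

theorem κmap_hochDiff_face_castSucc_eq_face_succ {a : Fin (n + 2) → A} {l : Fin (n + 2)}
    (hl : a l ∈ B) (x : X) :
    κmap k A B X n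
        (hochDiff k A X n (face k A X (n + 1) l.castSucc (pureChain k A X (n + 2) a x))) =
      κmap k A B X n
        (hochDiff k A X n (face k A X (n + 1) l.succ (pureChain k A X (n + 2) a x))) := by
  -- Of the terms of `κ (b (b w)) = 0`, only the two faces that merge `a l` survive.
  have expand := map_hochDiff_of_mem k A X (f := κmap k A B X n ∘ₗ hochDiff k A X n) (S := B)
    (κmap_hochDiff_pureChain_of_mem B) hl x
  rw [LinearMap.comp_apply, ← LinearMap.comp_apply (hochDiff k A X n), hochDiff_comp_hochDiff,
    LinearMap.zero_apply, map_zero] at expand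
  exact sub_eq_zero.1 ((smul_eq_zero_iff_eq (Int.negOnePow l)).1 expand.symm)

theorem relRel_le_ker_κmap_hochDiff_liftTensor {σ : QM k A B →ₗ[k] A}
    (hσ : (πQ k A B).comp σ = LinearMap.id) :
    relRel k A B X n ≤
      LinearMap.ker (κmap k A B X n ∘ₗ hochDiff k A X n ∘ₗ liftTensor B X σ n) := by
  rw [relRel_eq_span_mergeDefect, Submodule.span_le]
  rintro _ ⟨l, a, x, hl, rfl⟩
  rw [SetLike.mem_coe, LinearMap.mem_ker, mergeDefect, map_sub, sub_eq_zero]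
  simp only [LinearMap.comp_apply, κmap_hochDiff_liftTensor_projTensor B hσ]
  exact κmap_hochDiff_face_castSucc_eq_face_succ B hl x

/-- The relative Hochschild differential, induced by the Hochschild differential of `A` through a
section `σ` of `π`. -/
noncomputable def relDiff {σ : QM k A B →ₗ[k] A}
    (hσ : (πQ k A B).comp σ = LinearMap.id) (n : ℕ) :
    RC k A B X (n + 1) →ₗ[k] RC k A B X n :=
  (relRel k A B X n).liftQ _ (relRel_le_ker_κmap_hochDiff_liftTensor B hσ)

theorem relDiff_comp_κmap {σ : QM k A B →ₗ[k] A}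
    (hσ : (πQ k A B).comp σ = LinearMap.id) (n : ℕ) :
    relDiff B hσ n ∘ₗ κmap k A B X (n + 1) = κmap k A B X n ∘ₗ hochDiff k A X n :=
  LinearMap.ext fun w => κmap_hochDiff_liftTensor_projTensor B hσ w

end RelativeDifferential

end JZH

/-- For an extension `B ⊆ A` of `k`-algebras, an `A`-bimodule `X` and a
`k`-linear section `σ` of `π : A → A/B`, the relative Hochschild boundary formula descends to
well-defined `k`-linear maps `b_{A|B} : X ⊗_{Bᵉ} (A/B)^{⊗_B n} → X ⊗_{Bᵉ} (A/B)^{⊗_B (n−1)}`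
(with target `X_B` for `n = 1`); these maps satisfy `b_{A|B} ∘ b_{A|B} = 0` and do not depend
on the choice of the section `σ`. -/
theorem relative_hochschild_differential_well_defined_squares_to_zero_and_independent_of_section
    (k : Type) [Field k] (A : Type) [Ring A] [Algebra k A] (B : Subalgebra k A)
    (X : Type) [AddCommGroup X] [Module k X]
    [Module A X] [Module Aᵐᵒᵖ X] [SMulCommClass A Aᵐᵒᵖ X]
    [IsScalarTower k A X] [IsScalarTower k Aᵐᵒᵖ X]
    (σ : JZH.QM k A B →ₗ[k] A) (hσ : (JZH.πQ k A B).comp σ = LinearMap.id) :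
    -- the formula induces well-defined maps:
    (∃ d : ∀ n, JZH.RC k A B X (n+1) →ₗ[k] JZH.RC k A B X n,
      JZH.IsRelDiff k A B X σ d) ∧
    -- any family of maps given by the formula squares to zero:
    (∀ d : ∀ n, JZH.RC k A B X (n+1) →ₗ[k] JZH.RC k A B X n,
      JZH.IsRelDiff k A B X σ d → ∀ n, (d n).comp (d (n+1)) = 0) ∧
    -- the maps do not depend on the choice of the `k`-linear section:
    (∀ (σ' : JZH.QM k A B →ₗ[k] A), (JZH.πQ k A B).comp σ' = LinearMap.id →
      ∀ (d d' : ∀ n, JZH.RC k A B X (n+1) →ₗ[k] JZH.RC k A B X n),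
        JZH.IsRelDiff k A B X σ d → JZH.IsRelDiff k A B X σ' d' → d = d') := by
  refine ⟨⟨JZH.relDiff B hσ, (JZH.isRelDiff_iff_comp_κmap B hσ).2 (JZH.relDiff_comp_κmap B hσ)⟩,
    fun d hd n => ?_, fun σ' hσ' d d' hd hd' => funext fun n => ?_⟩
  · rw [JZH.isRelDiff_iff_comp_κmap B hσ] at hd
    refine (LinearMap.cancel_right (JZH.κmap_surjective B X (n + 2))).1 ?_
    rw [LinearMap.comp_assoc, hd, ← LinearMap.comp_assoc, hd, LinearMap.comp_assoc,
      JZH.hochDiff_comp_hochDiff, LinearMap.comp_zero, LinearMap.zero_comp]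
  · rw [JZH.isRelDiff_iff_comp_κmap B hσ] at hd
    rw [JZH.isRelDiff_iff_comp_κmap B hσ'] at hd'
    exact (LinearMap.cancel_right (JZH.κmap_surjective B X (n + 1))).1 ((hd n).trans (hd' n).symm)
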